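/- arXiv:2005.12098 — 5 statements merged into one kernel-verified Lean document; each statement's English description precedes it below -/
import Mathlib

section
/- Let (X, k) be the solution of the Skorokhod problem with mean minimality condition and two constraints associated with (h, Y, l, u), and put C = max( c_h⁻¹, 2·C_h·c_h⁻¹ + 1 ). Then for all 0 ≤ t ≤ q: sup_{t≤s≤q} |k_s − k_t| ≤ C·( sup_{t≤s≤q} E|Y_s − Y_t| + L_h·(q − t) + sup_{t≤s≤q} max(|l_s − l_t|, |u_s − u_t|) ), and E[ sup_{t≤s≤q} |X_s − X_t| ] ≤ (C+1)·E[ sup_{t≤s≤q} |Y_s − Y_t| ] + C·( L_h·(q − t) + sup_{t≤s≤q} max(|l_s − l_t|, |u_s − u_t|) ). -/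
open MeasureTheory Filter Set Function Topology

noncomputable section

/-- A function with values in a topological space is càdlàg on `[0,∞)`:
right-continuous at every `t ≥ 0` and admitting a left limit at every `t > 0`. -/
def CadlagOn {E : Type*} [TopologicalSpace E] (f : ℝ → E) : Prop :=
  (∀ t : ℝ, 0 ≤ t → ContinuousWithinAt f (Set.Ici t) t) ∧
  ∀ t : ℝ, 0 < t → ∃ L : E, Filter.Tendsto f (nhdsWithin t (Set.Iio t)) (nhds L)

/-- Condition (H) on `h : [0,∞) × ℝ → ℝ` with constants `Mh, Lh, ch, Ch`. -/
structure CondH (h : ℝ → ℝ → ℝ) (Mh Lh ch Ch : ℝ) : Prop where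
  meas : Measurable (Function.uncurry h)
  Mh_pos : 0 < Mh
  Lh_pos : 0 < Lh
  ch_pos : 0 < ch
  Ch_pos : 0 < Ch
  growth : ∀ t x : ℝ, 0 ≤ t → |h t x| ≤ Mh * (1 + |x|)
  strict_mono : ∀ t : ℝ, 0 ≤ t → StrictMono (h t)
  lip_time : ∀ s t x : ℝ, 0 ≤ s → 0 ≤ t → |h t x - h s x| ≤ Lh * |t - s|
  lip_lower : ∀ t x y : ℝ, 0 ≤ t → ch * |x - y| ≤ |h t x - h t y|
  lip_upper : ∀ t x y : ℝ, 0 ≤ t → |h t x - h t y| ≤ Ch * |x - y|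

/-- A process with càdlàg paths, integrable values, and values uniformly integrable
on every compact time interval. -/
structure NiceProcess {Ω : Type*} [MeasurableSpace Ω] (μ : Measure Ω) (Y : ℝ → Ω → ℝ) : Prop where
  cadlag : ∀ ω, CadlagOn fun t => Y t ω
  integrable : ∀ t : ℝ, 0 ≤ t → Integrable (Y t) μ
  unifInt : ∀ q : ℝ, 0 ≤ q → UniformIntegrable (fun t : Set.Icc (0:ℝ) q => Y t.1) 1 μ

/-- Solution of the Skorokhod problem with mean minimality condition and two constraints
associated with `(h, Y, l, u)`. -/
def MeanSP {Ω : Type*} [MeasurableSpace Ω] (μ : Measure Ω) (h : ℝ → ℝ → ℝ)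
    (Y : ℝ → Ω → ℝ) (l u : ℝ → ℝ) (X : ℝ → Ω → ℝ) (k : ℝ → ℝ) : Prop :=
  (∀ ω, CadlagOn fun t => X t ω) ∧ CadlagOn k ∧ k 0 = 0 ∧
  (∀ t : ℝ, 0 ≤ t → ∀ ω, X t ω = Y t ω + k t) ∧
  (∀ t : ℝ, 0 ≤ t → (∫ ω, h t (X t ω) ∂μ) ∈ Set.Icc (l t) (u t)) ∧
  (∀ t q : ℝ, 0 ≤ t → t ≤ q →
    ((∀ s : ℝ, t < s → s ≤ q → (∫ ω, h s (X s ω) ∂μ) < u s) → 0 ≤ k q - k t) ∧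
    ((∀ s : ℝ, t < s → s ≤ q → l s < ∫ ω, h s (X s ω) ∂μ) → k q - k t ≤ 0)) ∧
  ∀ t : ℝ, 0 < t →
    ((∫ ω, h t (X t ω) ∂μ) < u t → 0 ≤ k t - Function.leftLim k t) ∧
    (l t < ∫ ω, h t (X t ω) ∂μ → k t - Function.leftLim k t ≤ 0)

/-- Solution of the deterministic Skorokhod problem with two time-dependent barriers. -/
def DetSP (y lb ub x k : ℝ → ℝ) : Prop :=
  CadlagOn x ∧ CadlagOn k ∧ k 0 = 0 ∧
  (∀ t : ℝ, 0 ≤ t → x t = y t + k t ∧ x t ∈ Set.Icc (lb t) (ub t)) ∧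
  (∀ t q : ℝ, 0 ≤ t → t ≤ q →
    ((∀ s : ℝ, t < s → s ≤ q → x s < ub s) → 0 ≤ k q - k t) ∧
    ((∀ s : ℝ, t < s → s ≤ q → lb s < x s) → k q - k t ≤ 0)) ∧
  ∀ t : ℝ, 0 < t →
    (x t < ub t → 0 ≤ k t - Function.leftLim k t) ∧
    (lb t < x t → k t - Function.leftLim k t ≤ 0)

/-- Solution of the Skorokhod problem with mean minimality condition and a single
lower barrier `l`.  The minimality condition `∫ (E[h(s,X_s)] - l_s) dk_s = 0` is expressed
through any measure `ν` that agrees with the Lebesgue–Stieltjes measure of `k` on `[0,∞)`. -/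
def MeanSPLower {Ω : Type*} [MeasurableSpace Ω] (μ : Measure Ω) (h : ℝ → ℝ → ℝ)
    (Y : ℝ → Ω → ℝ) (l : ℝ → ℝ) (X : ℝ → Ω → ℝ) (k : ℝ → ℝ) : Prop :=
  (∀ ω, CadlagOn fun t => X t ω) ∧ CadlagOn k ∧ k 0 = 0 ∧
  (∀ t : ℝ, 0 ≤ t → ∀ ω, X t ω = Y t ω + k t) ∧
  (∀ t : ℝ, 0 ≤ t → l t ≤ ∫ ω, h t (X t ω) ∂μ) ∧
  MonotoneOn k (Set.Ici 0) ∧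
  ∀ ν : Measure ℝ,
    (∀ a b : ℝ, 0 ≤ a → a ≤ b → ν (Set.Ioc a b) = ENNReal.ofReal (k b - k a)) →
    ν {0} = 0 →
    ∀ t : ℝ, 0 ≤ t → (∫ s in Set.Icc 0 t, ((∫ ω, h s (X s ω) ∂μ) - l s) ∂ν) = 0

/-- Solution of the Skorokhod problem with mean minimality condition and a single
upper barrier `u`.  The minimality condition `∫ (u_s - E[h(s,X_s)]) d(-k)_s = 0` is expressed
through any measure `ν` that agrees with the Lebesgue–Stieltjes measure of `-k` on `[0,∞)`. -/
def MeanSPUpper {Ω : Type*} [MeasurableSpace Ω] (μ : Measure Ω) (h : ℝ → ℝ → ℝ)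
    (Y : ℝ → Ω → ℝ) (u : ℝ → ℝ) (X : ℝ → Ω → ℝ) (k : ℝ → ℝ) : Prop :=
  (∀ ω, CadlagOn fun t => X t ω) ∧ CadlagOn k ∧ k 0 = 0 ∧
  (∀ t : ℝ, 0 ≤ t → ∀ ω, X t ω = Y t ω + k t) ∧
  (∀ t : ℝ, 0 ≤ t → (∫ ω, h t (X t ω) ∂μ) ≤ u t) ∧
  AntitoneOn k (Set.Ici 0) ∧
  ∀ ν : Measure ℝ,
    (∀ a b : ℝ, 0 ≤ a → a ≤ b → ν (Set.Ioc a b) = ENNReal.ofReal (k a - k b)) →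
    ν {0} = 0 →
    ∀ t : ℝ, 0 ≤ t → (∫ s in Set.Icc 0 t, (u s - ∫ ω, h s (X s ω) ∂μ) ∂ν) = 0

/-- `OscN x η q` is the number of `η`-oscillations of `x` on `[0,q]`: the largest `m`
for which there are `0 ≤ t₁ ≤ t₂ ≤ ⋯ ≤ t_{2m} ≤ q` with `|x(t_{2i}) - x(t_{2i-1})| > η`. -/
def OscN (x : ℝ → ℝ) (η q : ℝ) : ℕ :=
  sSup {m : ℕ | ∃ a b : Fin m → ℝ,
    (∀ i, 0 ≤ a i ∧ a i ≤ b i ∧ b i ≤ q) ∧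
    (∀ i j, i < j → b i ≤ a j) ∧
    ∀ i, η < |x (b i) - x (a i)|}

/-- The left limit at `t` of a càdlàg function on `[0,∞)`, with the convention
`x(0-) = x(0)`. -/
def leftLimAt {E : Type*} [TopologicalSpace E] (x : ℝ → E) (t : ℝ) : E :=
  if t = 0 then x 0 else Function.leftLim x t

/-- Convergence `xₙ → x` in the Skorokhod `J₁` topology on `D([0,∞), E)`, expressed via
the sequence characterization used in the paper. -/
def DConvOn {E : Type*} [TopologicalSpace E] (xs : ℕ → ℝ → E) (x : ℝ → E) : Prop :=
  ∀ t : ℝ, 0 ≤ t → ∃ tn : ℕ → ℝ,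
    (∀ n, 0 ≤ tn n) ∧ Filter.Tendsto tn Filter.atTop (nhds t) ∧
    ∀ t' t'' : ℕ → ℝ, (∀ n, 0 ≤ t' n) → (∀ n, 0 ≤ t'' n) →
      Filter.Tendsto t' Filter.atTop (nhds t) → Filter.Tendsto t'' Filter.atTop (nhds t) →
      (∀ n, t' n < tn n ∧ tn n ≤ t'' n) →
      Filter.Tendsto (fun n => xs n (t' n)) Filter.atTop (nhds (leftLimAt x t)) ∧
      Filter.Tendsto (fun n => xs n (t'' n)) Filter.atTop (nhds (x t))

/-- A càdlàg function is bounded on compact intervals. -/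
theorem cadlag_bdd {f : ℝ → ℝ} (hf : CadlagOn f) (t q : ℝ) (ht : 0 ≤ t) :
    ∃ K : ℝ, ∀ s ∈ Set.Icc t q, |f s| ≤ K := by
  refine IsCompact.induction_on (p := fun S => ∃ K : ℝ, ∀ s ∈ S, |f s| ≤ K)
    (isCompact_Icc (a := t) (b := q)) ⟨0, by simp⟩ ?_ ?_ ?_
  · rintro S T hST ⟨K, hK⟩
    exact ⟨K, fun s hs => hK s (hST hs)⟩
  · rintro S T ⟨K, hK⟩ ⟨K', hK'⟩
    refine ⟨max K K', ?_⟩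
    rintro s (hs | hs)
    · exact (hK s hs).trans (le_max_left _ _)
    · exact (hK' s hs).trans (le_max_right _ _)
  · intro x hx
    have hx0 : 0 ≤ x := ht.trans hx.1
    have key : ∀ (F : Filter ℝ) (L : ℝ), Tendsto f F (𝓝 L) → ∀ᶠ s in F, |f s| ≤ |L| + 1 := by
      intro F L hL
      have h1 : Tendsto (fun s => |f s|) F (𝓝 |L|) := hL.abs
      exact (h1.eventually (gt_mem_nhds (lt_add_one |L|))).mono fun s hs => le_of_lt hs
    have hR := key _ _ (hf.1 x hx0)
    rcases eq_or_lt_of_le hx0 with h0 | h0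
    · refine ⟨Set.Icc t q ∩ {s | |f s| ≤ |f x| + 1}, ?_, ⟨_, fun s hs => hs.2⟩⟩
      have : 𝓝[Set.Icc t q] x ≤ 𝓝[Set.Ici x] x := by
        apply nhdsWithin_mono
        intro s hs
        have := hs.1
        simp only [Set.mem_Ici]
        linarith
      exact Filter.inter_mem self_mem_nhdsWithin (this hR)
    · obtain ⟨L, hL⟩ := hf.2 x h0
      have hLe := key _ _ hL
      refine ⟨{s | |f s| ≤ max (|f x| + 1) (|L| + 1)}, ?_, ⟨_, fun s hs => hs⟩⟩
      apply mem_nhdsWithin_of_mem_nhds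
      rw [← nhdsLT_sup_nhdsGE]
      refine Filter.mem_sup.2 ⟨?_, ?_⟩
      · exact hLe.mono fun s hs => le_max_of_le_right hs
      · exact hR.mono fun s hs => le_max_of_le_left hs

theorem cadlag_neg {f : ℝ → ℝ} (hf : CadlagOn f) : CadlagOn (fun t => - f t) := by
  refine ⟨fun t ht => (hf.1 t ht).neg, fun t ht => ?_⟩
  obtain ⟨L, hL⟩ := hf.2 t ht
  exact ⟨-L, hL.neg⟩

/-- Abstract one-sided estimate: `k` can only increase through contact times in `A`. -/
theorem one_sided {k : ℝ → ℝ} (hk : CadlagOn k) (A : Set ℝ) (R t s : ℝ) (ht : 0 ≤ t)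
    (hts : t ≤ s) (hR : 0 ≤ R)
    (h1 : ∀ a b : ℝ, 0 ≤ a → a ≤ b → (∀ r, a < r → r ≤ b → r ∉ A) → k b ≤ k a)
    (h2 : ∀ r L : ℝ, 0 < r → r ∉ A → Tendsto k (𝓝[<] r) (𝓝 L) → k r ≤ L)
    (h3 : ∀ r ∈ A, t < r → r ≤ s → k r - k t ≤ R) : k s - k t ≤ R := by
  set B : Set ℝ := A ∩ Set.Ioc t s with hB
  by_cases hne : B.Nonempty
  · have hbd : BddAbove B := ⟨s, fun r hr => hr.2.2⟩
    set σ := sSup B with hσ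
    obtain ⟨r0, hr0⟩ := hne
    have hr0σ : r0 ≤ σ := le_csSup hbd hr0
    have htσ : t < σ := lt_of_lt_of_le hr0.2.1 hr0σ
    have hσs : σ ≤ s := csSup_le ⟨r0, hr0⟩ fun r hr => hr.2.2
    have hks : k s ≤ k σ := by
      apply h1 σ s (by linarith) hσs
      intro r hr hrs hrA
      have : r ≤ σ := le_csSup hbd ⟨hrA, by linarith, hrs⟩
      linarith
    by_cases hσA : σ ∈ A
    · have := h3 σ hσA htσ hσs
      linarith
    · obtain ⟨L, hL⟩ := hk.2 σ (by linarith)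
      have hkL := h2 σ L (by linarith) hσA hL
      have hLR : L ≤ k t + R := by
        apply le_of_tendsto_of_frequently hL
        rw [Filter.Frequently, Filter.Eventually, mem_nhdsLT_iff_exists_Ioo_subset]
        rintro ⟨a, ha, hsub⟩
        obtain ⟨r, hr, har⟩ := exists_lt_of_lt_csSup ⟨r0, hr0⟩ (show a < sSup B from ha)
        have hrσ : r ≤ σ := le_csSup hbd hr
        have hne : r ≠ σ := fun e => hσA (e ▸ hr.1)
        have := hsub ⟨har, lt_of_le_of_ne hrσ hne⟩
        apply this
        have := h3 r hr.1 hr.2.1 hr.2.2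
        linarith
      linarith
  · have := h1 t s ht hts fun r hr hrs hrA => hne ⟨r, hrA, hr, hrs⟩
    linarith

/-- modulus-of-oscillation estimates for `k` and `X` on `[t, q]`. -/
theorem stmt_9 {Ω : Type*} [MeasurableSpace Ω] (μ : Measure Ω) [IsProbabilityMeasure μ]
    (h : ℝ → ℝ → ℝ) (Mh Lh ch Ch : ℝ) (hH : CondH h Mh Lh ch Ch)
    (Y : ℝ → Ω → ℝ) (hY : NiceProcess μ Y)
    (l u : ℝ → ℝ) (hl : CadlagOn l) (hu : CadlagOn u)
    (hlu : ∀ t : ℝ, 0 ≤ t → l t ≤ u t)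
    (h0 : (∫ ω, h 0 (Y 0 ω) ∂μ) ∈ Set.Icc (l 0) (u 0))
    (X : ℝ → Ω → ℝ) (k : ℝ → ℝ) (hsol : MeanSP μ h Y l u X k)
    (C : ℝ) (hC : C = max ch⁻¹ (2 * Ch * ch⁻¹ + 1))
    (t q : ℝ) (ht : 0 ≤ t) (htq : t ≤ q) :
    sSup ((fun s => |k s - k t|) '' Set.Icc t q) ≤
      C * (sSup ((fun s => ∫ ω, |Y s ω - Y t ω| ∂μ) '' Set.Icc t q) + Lh * (q - t) +
        sSup ((fun s => max |l s - l t| |u s - u t|) '' Set.Icc t q)) ∧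
    (∫⁻ ω, ENNReal.ofReal (sSup ((fun s => |X s ω - X t ω|) '' Set.Icc t q)) ∂μ) ≤
      ENNReal.ofReal (C + 1) *
          (∫⁻ ω, ENNReal.ofReal (sSup ((fun s => |Y s ω - Y t ω|) '' Set.Icc t q)) ∂μ) +
        ENNReal.ofReal (C * (Lh * (q - t) +
          sSup ((fun s => max |l s - l t| |u s - u t|) '' Set.Icc t q))) := by
  obtain ⟨hXc, hkc, hk0, hXY, hcon, hmin, hjump⟩ := hsol
  have hch := hH.ch_pos
  have hCh := hH.Ch_pos
  have hLh := hH.Lh_pos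
  -- integrability of shifted processes
  have hint : ∀ s a : ℝ, 0 ≤ s → Integrable (fun ω => h s (Y s ω + a)) μ := by
    intro s a hs
    have hm : Measurable (h s) := hH.meas.comp measurable_prodMk_left
    have hYs : Integrable (fun ω => Y s ω + a) μ := (hY.integrable s hs).add (integrable_const a)
    have hb : Integrable (fun ω => Mh * (1 + |Y s ω + a|)) μ :=
      ((integrable_const (1:ℝ)).add hYs.abs).const_mul Mh
    refine hb.mono' ?_ ?_
    · exact (hm.comp_aemeasurable hYs.aemeasurable).aestronglyMeasurable
    · exact Filter.Eventually.of_forall fun ω => hH.growth s _ hs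
  have hdint : ∀ s : ℝ, 0 ≤ s → Integrable (fun ω => |Y s ω - Y t ω|) μ := fun s hs =>
    ((hY.integrable s hs).sub (hY.integrable t ht)).abs
  have hEX : ∀ s : ℝ, 0 ≤ s → (∫ ω, h s (X s ω) ∂μ) = ∫ ω, h s (Y s ω + k s) ∂μ := by
    intro s hs
    simp_rw [hXY s hs]
  have hdiff : ∀ s a : ℝ, 0 ≤ s → |(∫ ω, h s (Y s ω + a) ∂μ) - ∫ ω, h t (Y t ω + a) ∂μ| ≤
      Lh * |s - t| + Ch * ∫ ω, |Y s ω - Y t ω| ∂μ := by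
    intro s a hs
    rw [← integral_sub (hint s a hs) (hint t a ht)]
    refine (abs_integral_le_integral_abs).trans ?_
    have e : Lh * |s - t| + Ch * ∫ ω, |Y s ω - Y t ω| ∂μ
        = ∫ ω, (Lh * |s - t| + Ch * |Y s ω - Y t ω|) ∂μ := by
      rw [integral_add (integrable_const _) ((hdint s hs).const_mul Ch)]
      simp [integral_const_mul]
    rw [e]
    refine integral_mono ((hint s a hs).sub (hint t a ht)).abs
      ((integrable_const _).add ((hdint s hs).const_mul Ch)) fun ω => ?_
    have e1 := hH.lip_time t s (Y s ω + a) ht hs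
    have e2 := hH.lip_upper t (Y s ω + a) (Y t ω + a) ht
    have e3 : Y s ω + a - (Y t ω + a) = Y s ω - Y t ω := by ring
    rw [e3] at e2
    have := abs_sub_le (h s (Y s ω + a)) (h t (Y s ω + a)) (h t (Y t ω + a))
    simp only
    linarith
  have hlow : ∀ s a b : ℝ, 0 ≤ s → a ≤ b →
      ch * (b - a) ≤ (∫ ω, h s (Y s ω + b) ∂μ) - ∫ ω, h s (Y s ω + a) ∂μ := by
    intro s a b hs hab
    rw [← integral_sub (hint s b hs) (hint s a hs)]
    have e : ch * (b - a) = ∫ _ω : Ω, ch * (b - a) ∂μ := by simp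
    rw [e]
    refine integral_mono (integrable_const _) ((hint s b hs).sub (hint s a hs)) fun ω => ?_
    have e1 := hH.lip_lower s (Y s ω + b) (Y s ω + a) hs
    have e2 : h s (Y s ω + a) ≤ h s (Y s ω + b) :=
      (hH.strict_mono s hs).monotone (by linarith)
    rw [abs_of_nonneg (by linarith), abs_of_nonneg (by linarith)] at e1
    simp only
    linarith
  -- boundedness of the suprema
  have hbdY : BddAbove ((fun s => ∫ ω, |Y s ω - Y t ω| ∂μ) '' Set.Icc t q) := by
    obtain ⟨_, _, K, hK⟩ := hY.unifInt q (ht.trans htq)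
    have hK' : ∀ s ∈ Set.Icc t q, ∫ ω, |Y s ω| ∂μ ≤ K := by
      intro s hs
      have h1 := hK ⟨s, ht.trans hs.1, hs.2⟩
      have h2 : eLpNorm (Y s) 1 μ ≤ K := h1
      rw [eLpNorm_one_eq_lintegral_enorm] at h2
      have h3 := integral_norm_eq_lintegral_enorm (hY.integrable s (ht.trans hs.1)).1
      simp only [Real.norm_eq_abs] at h3
      rw [h3]
      exact ENNReal.toReal_mono (by simp) h2
    refine ⟨K + K, ?_⟩
    rintro _ ⟨s, hs, rfl⟩
    have hs0 : 0 ≤ s := ht.trans hs.1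
    have i1 := (hY.integrable s hs0).abs
    have i2 := (hY.integrable t ht).abs
    calc ∫ ω, |Y s ω - Y t ω| ∂μ ≤ ∫ ω, (|Y s ω| + |Y t ω|) ∂μ :=
          integral_mono (hdint s hs0) (i1.add i2) fun ω => abs_sub _ _
      _ = (∫ ω, |Y s ω| ∂μ) + ∫ ω, |Y t ω| ∂μ := integral_add i1 i2
      _ ≤ K + K := add_le_add (hK' s hs) (hK' t ⟨le_rfl, htq⟩)
  have hosc : ∀ f : ℝ → ℝ, CadlagOn f → ∃ K, ∀ s ∈ Set.Icc t q, |f s - f t| ≤ K := by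
    intro f hf
    obtain ⟨K, hK⟩ := cadlag_bdd hf t q ht
    refine ⟨K + K, fun s hs => (abs_sub _ _).trans (add_le_add (hK s hs) (hK t ⟨le_rfl, htq⟩))⟩
  have hbdB : BddAbove ((fun s => max |l s - l t| |u s - u t|) '' Set.Icc t q) := by
    obtain ⟨K, hK⟩ := hosc l hl
    obtain ⟨K', hK'⟩ := hosc u hu
    refine ⟨max K K', ?_⟩
    rintro _ ⟨s, hs, rfl⟩
    exact max_le_max (hK s hs) (hK' s hs)
  have hne : ∀ f : ℝ → ℝ, (f '' Set.Icc t q).Nonempty := fun f => ⟨f t, t, ⟨le_rfl, htq⟩, rfl⟩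
  set D := sSup ((fun s => ∫ ω, |Y s ω - Y t ω| ∂μ) '' Set.Icc t q) with hD
  set B := sSup ((fun s => max |l s - l t| |u s - u t|) '' Set.Icc t q) with hBdef
  have hDs : ∀ s ∈ Set.Icc t q, ∫ ω, |Y s ω - Y t ω| ∂μ ≤ D := fun s hs =>
    le_csSup hbdY ⟨s, hs, rfl⟩
  have hBs : ∀ s ∈ Set.Icc t q, max |l s - l t| |u s - u t| ≤ B := fun s hs =>
    le_csSup hbdB ⟨s, hs, rfl⟩
  have hD0 : 0 ≤ D := le_trans (integral_nonneg fun ω => abs_nonneg _) (hDs t ⟨le_rfl, htq⟩)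
  have hB0 : 0 ≤ B :=
    le_trans (le_max_of_le_left (abs_nonneg _)) (hBs t ⟨le_rfl, htq⟩)
  set R := ch⁻¹ * (Ch * D + Lh * (q - t) + B) with hRdef
  have hqt : 0 ≤ Lh * (q - t) := mul_nonneg hLh.le (by linarith)
  have hChD : 0 ≤ Ch * D := mul_nonneg hCh.le hD0
  have hR0 : 0 ≤ R := mul_nonneg (inv_nonneg.2 hch.le) (by linarith)
  have hRmul : ch * R = Ch * D + Lh * (q - t) + B := by
    rw [hRdef]; field_simp
  have hdiff' : ∀ s ∈ Set.Icc t q, |(∫ ω, h s (Y s ω + k t) ∂μ) - ∫ ω, h t (Y t ω + k t) ∂μ| ≤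
      Lh * (q - t) + Ch * D := by
    intro s hs
    refine (hdiff s (k t) (ht.trans hs.1)).trans (add_le_add ?_ ?_)
    · rw [abs_of_nonneg (by linarith [hs.1])]
      exact mul_le_mul_of_nonneg_left (by linarith [hs.2]) hLh.le
    · exact mul_le_mul_of_nonneg_left (hDs s hs) hCh.le
  have hct := hcon t ht
  rw [hEX t ht] at hct
  have hup : ∀ s ∈ Set.Icc t q, k s - k t ≤ R := by
    intro s hs
    refine one_sided hkc {r | ∫ ω, h r (X r ω) ∂μ ≤ l r} R t s ht hs.1 hR0 ?_ ?_ ?_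
    · intro a b ha hab hr
      have := (hmin a b ha hab).2 fun r h1 h2 => not_le.1 (hr r h1 h2)
      linarith
    · intro r L hr hrA hL
      have := (hjump r hr).2 (not_le.1 hrA)
      rw [leftLim_eq_of_tendsto hL] at this
      linarith
    · intro r hrA htr hrs
      have hr0 : 0 ≤ r := by linarith
      have hrI : r ∈ Set.Icc t q := ⟨htr.le, hrs.trans hs.2⟩
      rcases le_total (k r) (k t) with hle | hle
      · linarith
      · have e1 := hlow r (k t) (k r) hr0 hle
        have e2 : ∫ ω, h r (Y r ω + k r) ∂μ ≤ l r := by rw [← hEX r hr0]; exact hrA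
        have e3 := (abs_le.1 (hdiff' r hrI)).1
        have e4 := le_trans (le_max_left _ _) (hBs r hrI)
        have e5 := (abs_le.1 e4).2
        have e6 := hct.1
        refine le_of_mul_le_mul_left ?_ hch
        rw [hRmul]
        linarith
  have hdown : ∀ s ∈ Set.Icc t q, k t - k s ≤ R := by
    intro s hs
    have := one_sided (cadlag_neg hkc) {r | u r ≤ ∫ ω, h r (X r ω) ∂μ} R t s ht hs.1 hR0 ?_ ?_ ?_
    · linarith
    · intro a b ha hab hr
      have := (hmin a b ha hab).1 fun r h1 h2 => not_le.1 (hr r h1 h2)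
      linarith
    · intro r L hr hrA hL
      have := (hjump r hr).1 (not_le.1 hrA)
      have hL' : Tendsto k (𝓝[<] r) (𝓝 (-L)) := by simpa using hL.neg
      rw [leftLim_eq_of_tendsto hL'] at this
      linarith
    · intro r hrA htr hrs
      have hr0 : 0 ≤ r := by linarith
      have hrI : r ∈ Set.Icc t q := ⟨htr.le, hrs.trans hs.2⟩
      rcases le_total (k t) (k r) with hle | hle
      · linarith
      · have e1 := hlow r (k r) (k t) hr0 hle
        have e2 : u r ≤ ∫ ω, h r (Y r ω + k r) ∂μ := by rw [← hEX r hr0]; exact hrA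
        have e3 := (abs_le.1 (hdiff' r hrI)).2
        have e4 := le_trans (le_max_right _ _) (hBs r hrI)
        have e5 := (abs_le.1 e4).1
        have e6 := hct.2
        refine le_of_mul_le_mul_left ?_ hch
        rw [hRmul]
        linarith
  have hC1 : ch⁻¹ ≤ C := hC ▸ le_max_left _ _
  have hC2 : 2 * Ch * ch⁻¹ + 1 ≤ C := hC ▸ le_max_right _ _
  have hci : 0 < ch⁻¹ := inv_pos.2 hch
  have hC0 : 0 ≤ C := hci.le.trans hC1
  have hRC : R ≤ C * (D + Lh * (q - t) + B) := by
    have a1 : ch⁻¹ * (Lh * (q - t) + B) ≤ C * (Lh * (q - t) + B) :=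
      mul_le_mul_of_nonneg_right hC1 (by linarith)
    have a2 : Ch * ch⁻¹ ≤ C := by
      have : 0 < Ch * ch⁻¹ := mul_pos hCh hci
      linarith
    have a3 : Ch * ch⁻¹ * D ≤ C * D := mul_le_mul_of_nonneg_right a2 hD0
    rw [hRdef]
    linarith
  have hkR : ∀ s ∈ Set.Icc t q, |k s - k t| ≤ R := fun s hs =>
    abs_le.2 ⟨by linarith [hdown s hs], hup s hs⟩
  refine ⟨?_, ?_⟩
  · refine (csSup_le (hne _) ?_).trans hRC
    rintro _ ⟨s, hs, rfl⟩
    exact hkR s hs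
  · set I := ∫⁻ ω, ENNReal.ofReal (sSup ((fun s => |Y s ω - Y t ω|) '' Set.Icc t q)) ∂μ with hI
    have hYle : ∀ ω, ∀ s ∈ Set.Icc t q,
        |Y s ω - Y t ω| ≤ sSup ((fun s => |Y s ω - Y t ω|) '' Set.Icc t q) := by
      intro ω s hs
      refine le_csSup ?_ ⟨s, hs, rfl⟩
      obtain ⟨K, hK⟩ := hosc _ (hY.cadlag ω)
      refine ⟨K, ?_⟩
      rintro _ ⟨r, hr, rfl⟩
      exact hK r hr
    have hDI : ENNReal.ofReal D ≤ I := by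
      by_cases hIt : I = ⊤
      · rw [hIt]; exact le_top
      · rw [ENNReal.ofReal_le_iff_le_toReal hIt]
        refine csSup_le (hne _) ?_
        rintro _ ⟨s, hs, rfl⟩
        rw [← ENNReal.ofReal_le_iff_le_toReal hIt,
          ofReal_integral_eq_lintegral_ofReal (hdint s (ht.trans hs.1))
            (Filter.Eventually.of_forall fun ω => abs_nonneg _)]
        exact lintegral_mono fun ω => ENNReal.ofReal_le_ofReal (hYle ω s hs)
    calc ∫⁻ ω, ENNReal.ofReal (sSup ((fun s => |X s ω - X t ω|) '' Set.Icc t q)) ∂μ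
        ≤ ∫⁻ ω, (ENNReal.ofReal (sSup ((fun s => |Y s ω - Y t ω|) '' Set.Icc t q))
            + ENNReal.ofReal R) ∂μ := by
          refine lintegral_mono fun ω => ?_
          refine le_trans (ENNReal.ofReal_le_ofReal ?_) ENNReal.ofReal_add_le
          refine csSup_le (hne _) ?_
          rintro _ ⟨s, hs, rfl⟩
          have e : X s ω - X t ω = (Y s ω - Y t ω) + (k s - k t) := by
            rw [hXY s (ht.trans hs.1), hXY t ht]; ring
          simp only
          rw [e]
          exact (abs_add_le _ _).trans (add_le_add (hYle ω s hs) (hkR s hs))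
      _ = I + ENNReal.ofReal R := by
          rw [lintegral_add_right _ measurable_const]
          simp [hI]
      _ ≤ I + ENNReal.ofReal (C * D + C * (Lh * (q - t) + B)) := by
          gcongr
          linarith
      _ ≤ I + (ENNReal.ofReal C * I + ENNReal.ofReal (C * (Lh * (q - t) + B))) := by
          gcongr
          refine ENNReal.ofReal_add_le.trans ?_
          rw [ENNReal.ofReal_mul hC0]
          gcongr
      _ = ENNReal.ofReal (C + 1) * I + ENNReal.ofReal (C * (Lh * (q - t) + B)) := by
          rw [ENNReal.ofReal_add hC0 zero_le_one, ENNReal.ofReal_one]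
          ring
end
end

section
/- Let (X, k) be a solution of the Skorokhod problem with mean minimality condition and two constraints associated with (h, Y, l, u). Then for every t > 0: if Δk_t = k_t − k_{t−} > 0 then E[h(t, X_t)] = l_t; if Δk_t < 0 then E[h(t, X_t)] = u_t; and in all cases k_t = max( min( k_{t−}, ū_t − E[Y_t] ), l̄_t − E[Y_t] ). -/
open MeasureTheory Filter Set Function Topology

noncomputable section

/-- at a positive jump of `k` the lower constraint is attained, at a negative
jump the upper one, and `k_t = max(min(k_{t-}, ū_t - E Y_t), l̄_t - E Y_t)`. -/
theorem stmt_10 {Ω : Type*} [MeasurableSpace Ω] (μ : Measure Ω) [IsProbabilityMeasure μ]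
    (h : ℝ → ℝ → ℝ) (Mh Lh ch Ch : ℝ) (hH : CondH h Mh Lh ch Ch)
    (Y : ℝ → Ω → ℝ) (hY : NiceProcess μ Y)
    (l u : ℝ → ℝ) (hl : CadlagOn l) (hu : CadlagOn u)
    (hlu : ∀ t : ℝ, 0 ≤ t → l t ≤ u t)
    (h0 : (∫ ω, h 0 (Y 0 ω) ∂μ) ∈ Set.Icc (l 0) (u 0))
    (lbar ubar : ℝ → ℝ)
    (hlbar : ∀ t : ℝ, 0 ≤ t → (∫ ω, h t (Y t ω - (∫ ω', Y t ω' ∂μ) + lbar t) ∂μ) = l t)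
    (hubar : ∀ t : ℝ, 0 ≤ t → (∫ ω, h t (Y t ω - (∫ ω', Y t ω' ∂μ) + ubar t) ∂μ) = u t)
    (X : ℝ → Ω → ℝ) (k : ℝ → ℝ) (hsol : MeanSP μ h Y l u X k) :
    ∀ t : ℝ, 0 < t →
      (0 < k t - Function.leftLim k t → (∫ ω, h t (X t ω) ∂μ) = l t) ∧
      (k t - Function.leftLim k t < 0 → (∫ ω, h t (X t ω) ∂μ) = u t) ∧
      k t = max (min (Function.leftLim k t) (ubar t - ∫ ω, Y t ω ∂μ))
        (lbar t - ∫ ω, Y t ω ∂μ) := by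
  obtain ⟨-, -, -, hX, hE, -, hJ⟩ := hsol
  intro t ht
  have ht0 := ht.le
  have hint : ∀ z : ℝ, Integrable (fun ω => h t (Y t ω + z)) μ := by
    intro z
    have hYi : Integrable (fun ω => Y t ω + z) μ := (hY.integrable t ht0).add (integrable_const z)
    have hm : Measurable (h t) := hH.meas.comp measurable_prodMk_left
    refine Integrable.mono' (g := fun ω => Mh * (1 + |Y t ω + z|))
      (((integrable_const (1:ℝ)).add hYi.abs).const_mul Mh)
      (hm.comp_aemeasurable hYi.aemeasurable).aestronglyMeasurable ?_
    exact Eventually.of_forall fun ω => by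
      rw [Real.norm_eq_abs]
      exact hH.growth t _ ht0
  have hmono : StrictMono (fun z : ℝ => ∫ ω, h t (Y t ω + z) ∂μ) := by
    intro a b hab
    have hpos : 0 < ch * (b - a) := mul_pos hH.ch_pos (sub_pos.2 hab)
    have hle : ∫ ω, (h t (Y t ω + a) + ch * (b - a)) ∂μ ≤ ∫ ω, h t (Y t ω + b) ∂μ := by
      refine integral_mono ((hint a).add (integrable_const _)) (hint b) fun ω => ?_
      have h1 := hH.lip_lower t (Y t ω + b) (Y t ω + a) ht0
      have h2 : h t (Y t ω + a) < h t (Y t ω + b) := hH.strict_mono t ht0 (by linarith)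
      rw [abs_of_pos (sub_pos.2 h2), abs_of_pos (by linarith)] at h1
      have h3 : Y t ω + b - (Y t ω + a) = b - a := by ring
      rw [h3] at h1
      show h t (Y t ω + a) + ch * (b - a) ≤ h t (Y t ω + b)
      linarith
    rw [integral_add (hint a) (integrable_const _)] at hle
    simp only [integral_const, probReal_univ, one_smul] at hle
    show ∫ ω, h t (Y t ω + a) ∂μ < ∫ ω, h t (Y t ω + b) ∂μ
    linarith
  have hEk : ∫ ω, h t (X t ω) ∂μ = ∫ ω, h t (Y t ω + k t) ∂μ := by
    simp only [hX t ht0]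
  have hL : ∫ ω, h t (Y t ω + (lbar t - ∫ ω', Y t ω' ∂μ)) ∂μ = l t := by
    rw [← hlbar t ht0]
    congr 1; ext ω; congr 1; ring
  have hU : ∫ ω, h t (Y t ω + (ubar t - ∫ ω', Y t ω' ∂μ)) ∂μ = u t := by
    rw [← hubar t ht0]
    congr 1; ext ω; congr 1; ring
  obtain ⟨hE1, hE2⟩ := hE t ht0
  obtain ⟨hJ1, hJ2⟩ := hJ t ht
  have hP : 0 < k t - Function.leftLim k t → (∫ ω, h t (X t ω) ∂μ) = l t := by
    intro hp
    by_contra hne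
    exact absurd (hJ2 (lt_of_le_of_ne hE1 (Ne.symm hne))) (not_le.2 hp)
  have hN : k t - Function.leftLim k t < 0 → (∫ ω, h t (X t ω) ∂μ) = u t := by
    intro hp
    by_contra hne
    exact absurd (hJ1 (lt_of_le_of_ne hE2 hne)) (not_le.2 hp)
  refine ⟨hP, hN, ?_⟩
  generalize hA : lbar t - ∫ ω', Y t ω' ∂μ = A at *
  generalize hB : ubar t - ∫ ω', Y t ω' ∂μ = B at *
  have hAk : A ≤ k t := hmono.le_iff_le.1 (by
    show ∫ ω, h t (Y t ω + A) ∂μ ≤ ∫ ω, h t (Y t ω + k t) ∂μ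
    linarith)
  have hkB : k t ≤ B := hmono.le_iff_le.1 (by
    show ∫ ω, h t (Y t ω + k t) ∂μ ≤ ∫ ω, h t (Y t ω + B) ∂μ
    linarith)
  rcases lt_trichotomy (k t - Function.leftLim k t) 0 with hc | hc | hc
  · have hk : k t = B := hmono.injective (by
      show ∫ ω, h t (Y t ω + k t) ∂μ = ∫ ω, h t (Y t ω + B) ∂μ
      linarith [hN hc])
    rw [min_eq_right (by linarith), max_eq_left (by linarith), hk]
  · have hk : Function.leftLim k t = k t := by linarith
    rw [hk, min_eq_left hkB, max_eq_left hAk]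
  · have hk : k t = A := hmono.injective (by
      show ∫ ω, h t (Y t ω + k t) ∂μ = ∫ ω, h t (Y t ω + A) ∂μ
      linarith [hP hc])
    rw [max_eq_right, hk]
    exact (min_le_left _ _).trans (by linarith)
end
end

section
/- Let u : [0,∞) → ℝ be càdlàg with E[h(0, Y_0)] ≤ u_0. Then there exists a unique solution (X, k) of the Skorokhod problem with mean minimality condition and upper barrier u associated with (h, Y, u); moreover k_t = −sup_{s≤t} (ū_s − E[Y_s])⁻ for every t ≥ 0, where ū : [0,∞) → ℝ is the unique function with E[h(s, Y_s − E[Y_s] + ū_s)] = u_s for all s ≥ 0 and a⁻ = max(−a, 0). -/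
open MeasureTheory Filter Set Function Topology

noncomputable section

lemma CadlagOn.right' {f : ℝ → ℝ} (hf : CadlagOn f) (t : ℝ) :
    ContinuousWithinAt (fun s => f (max s 0)) (Set.Ici t) t := by
  have h1 := hf.1 (max t 0) (le_max_right _ _)
  refine ContinuousWithinAt.comp (t := Set.Ici (max t 0)) h1 ?_ ?_
  · exact (continuous_id.max continuous_const).continuousWithinAt
  · intro s hs
    exact max_le_max_right 0 (mem_Ici.1 hs)

lemma CadlagOn.measurable' {f : ℝ → ℝ} (hf : CadlagOn f) :
    Measurable (fun s => f (max s 0)) := by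
  set g : ℝ → ℝ := fun s => f (max s 0) with hg
  refine measurable_of_tendsto_metrizable
    (f := fun (n : ℕ) (s : ℝ) => g (((⌊((n:ℝ)+1) * s⌋ : ℝ) + 1) / ((n:ℝ)+1))) ?_ ?_
  · intro n
    have h1 : Measurable (fun z : ℤ => g (((z : ℝ) + 1) / ((n:ℝ)+1))) := measurable_from_top
    have h2 : Measurable (fun s : ℝ => ⌊((n:ℝ)+1) * s⌋) :=
      Int.measurable_floor.comp (measurable_const.mul measurable_id)
    exact h1.comp h2
  · rw [tendsto_pi_nhds]
    intro s
    have hlow : ∀ n : ℕ, s ≤ ((⌊((n:ℝ)+1) * s⌋ : ℝ) + 1) / ((n:ℝ)+1) := by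
      intro n
      have hn : (0:ℝ) < (n:ℝ)+1 := by positivity
      rw [le_div_iff₀ hn]
      have := Int.lt_floor_add_one (((n:ℝ)+1) * s)
      linarith
    have hup : ∀ n : ℕ, ((⌊((n:ℝ)+1) * s⌋ : ℝ) + 1) / ((n:ℝ)+1) ≤ s + 1 / ((n:ℝ)+1) := by
      intro n
      have hn : (0:ℝ) < (n:ℝ)+1 := by positivity
      rw [div_le_iff₀ hn, add_mul s, one_div, inv_mul_cancel₀ hn.ne']
      have := Int.floor_le (((n:ℝ)+1) * s)
      linarith
    have hlim : Tendsto (fun n : ℕ => s + 1 / ((n:ℝ)+1)) atTop (𝓝 s) := by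
      simpa using (tendsto_const_nhds (x := s)).add
        (tendsto_one_div_add_atTop_nhds_zero_nat (𝕜 := ℝ))
    have ht : Tendsto (fun n : ℕ => ((⌊((n:ℝ)+1) * s⌋ : ℝ) + 1) / ((n:ℝ)+1)) atTop (𝓝[≥] s) := by
      rw [tendsto_nhdsWithin_iff]
      exact ⟨tendsto_of_tendsto_of_tendsto_of_le_of_le tendsto_const_nhds hlim hlow hup,
        Eventually.of_forall hlow⟩
    exact (hf.right' s).tendsto.comp ht

lemma CadlagOn.bdd {f : ℝ → ℝ} (hf : CadlagOn f) (q : ℝ) :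
    ∃ C, ∀ s ∈ Set.Icc 0 q, |f s| ≤ C := by
  refine (isCompact_Icc (a := (0:ℝ)) (b := q)).induction_on
    (p := fun S => ∃ C, ∀ s ∈ S, |f s| ≤ C) ⟨0, by simp⟩ ?_ ?_ ?_
  · rintro S T hST ⟨C, hC⟩
    exact ⟨C, fun s hs => hC s (hST hs)⟩
  · rintro S T ⟨C, hC⟩ ⟨D, hD⟩
    refine ⟨max C D, ?_⟩
    rintro s (hs | hs)
    · exact (hC s hs).trans (le_max_left _ _)
    · exact (hD s hs).trans (le_max_right _ _)
  · intro x hx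
    have hr : ∀ᶠ s in 𝓝[≥] x, |f s| ≤ |f x| + 1 := by
      have := (hf.1 x hx.1).tendsto.abs
      exact (this.eventually (gt_mem_nhds (lt_add_one _))).mono fun _ h => le_of_lt h
    rcases hx.1.eq_or_lt with h0 | hpos
    · refine ⟨{s | |f s| ≤ |f x| + 1}, ?_, ⟨_, fun s hs => hs⟩⟩
      exact nhdsWithin_mono x (fun s hs => by rw [← h0]; exact hs.1) hr
    · obtain ⟨L, hL⟩ := hf.2 x hpos
      have hl : ∀ᶠ s in 𝓝[<] x, |f s| ≤ |L| + 1 :=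
        (hL.abs.eventually (gt_mem_nhds (lt_add_one _))).mono fun _ h => le_of_lt h
      have : ∀ᶠ s in 𝓝 x, |f s| ≤ max (|f x| + 1) (|L| + 1) := by
        rw [← nhdsLT_sup_nhdsGE x, eventually_sup]
        exact ⟨hl.mono fun s h => h.trans (le_max_right _ _),
          hr.mono fun s h => h.trans (le_max_left _ _)⟩
      exact ⟨_, mem_nhdsWithin_of_mem_nhds this, ⟨_, fun s hs => hs⟩⟩

/-- running supremum -/
def runSup (v : ℝ → ℝ) (t : ℝ) : ℝ := sSup ((fun s => max (-(v s)) 0) '' Set.Icc 0 t)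

lemma runSup_bdd {v : ℝ → ℝ} (hv : CadlagOn v) (t : ℝ) :
    BddAbove ((fun s => max (-(v s)) 0) '' Set.Icc 0 t) := by
  obtain ⟨C, hC⟩ := hv.bdd t
  refine ⟨C, ?_⟩
  rintro _ ⟨s, hs, rfl⟩
  have := hC s hs
  exact max_le ((neg_le_abs _).trans this) ((abs_nonneg _).trans this)

lemma le_runSup {v : ℝ → ℝ} (hv : CadlagOn v) {s t : ℝ} (h0 : 0 ≤ s) (hs : s ≤ t) :
    -(v s) ≤ runSup v t :=
  (le_max_left _ _).trans (le_csSup (runSup_bdd hv t) ⟨s, ⟨h0, hs⟩, rfl⟩)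

lemma runSup_nonneg (v : ℝ → ℝ) (t : ℝ) : 0 ≤ runSup v t := by
  apply Real.sSup_nonneg
  rintro _ ⟨s, hs, rfl⟩
  exact le_max_right _ _

lemma runSup_le {v : ℝ → ℝ} {t C : ℝ} (hC : 0 ≤ C) (h : ∀ s, 0 ≤ s → s ≤ t → -(v s) ≤ C) :
    runSup v t ≤ C := by
  apply Real.sSup_le _ hC
  rintro _ ⟨s, hs, rfl⟩
  exact max_le (h s hs.1 hs.2) hC

lemma runSup_mono {v : ℝ → ℝ} (hv : CadlagOn v) : Monotone (runSup v) := by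
  intro s t hst
  exact runSup_le (runSup_nonneg _ _) fun r h0 hr => le_runSup hv h0 (hr.trans hst)

lemma runSup_zero {v : ℝ → ℝ} (h0 : 0 ≤ v 0) : runSup v 0 = 0 := by
  refine le_antisymm (runSup_le le_rfl ?_) (runSup_nonneg _ _)
  intro s h1 h2
  obtain rfl : s = 0 := le_antisymm h2 h1
  linarith

lemma runSup_cadlag {v : ℝ → ℝ} (hv : CadlagOn v) : CadlagOn (fun t => -runSup v t) := by
  constructor
  · intro t ht
    refine ContinuousWithinAt.neg ?_
    refine (tendsto_order.2 ⟨fun a ha => ?_, fun a ha => ?_⟩ :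
      Tendsto (runSup v) (𝓝[≥] t) (𝓝 (runSup v t)))
    · filter_upwards [self_mem_nhdsWithin] with s hs
      exact ha.trans_le (runSup_mono hv hs)
    · obtain ⟨b, hb1, hb2⟩ := exists_between ha
      have h1 : ∀ᶠ s in 𝓝[≥] t, -(v s) < b := by
        have := (hv.1 t ht).neg.tendsto
        exact this.eventually (gt_mem_nhds (lt_of_le_of_lt (le_runSup hv ht le_rfl) hb1))
      obtain ⟨r, hr, hr2⟩ := mem_nhdsGE_iff_exists_Ico_subset.1 h1
      filter_upwards [Ico_mem_nhdsGE hr] with s hs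
      refine lt_of_le_of_lt (runSup_le ((runSup_nonneg v t).trans hb1.le) ?_) hb2
      intro x hx0 hx
      rcases le_total x t with h | h
      · exact (le_runSup hv hx0 h).trans hb1.le
      · exact (hr2 (⟨h, hx.trans_lt hs.2⟩ : x ∈ Ico t r)).le
  · intro t ht
    exact ⟨_, ((runSup_mono hv).tendsto_leftLim t).neg⟩

lemma det_exist {v : ℝ → ℝ} (hv : CadlagOn v) (ν : Measure ℝ)
    (hν : ∀ a b : ℝ, 0 ≤ a → a ≤ b →
      ν (Set.Ioc a b) = ENNReal.ofReal (-runSup v a - -runSup v b))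
    (hν0 : ν {0} = 0) :
    ν {s | 0 ≤ s ∧ -runSup v s < v s} = 0 := by
  set A : Set ℝ := {s | 0 ≤ s ∧ -runSup v s < v s} with hA
  -- singletons are null
  have hsing : ∀ s ∈ A, ν {s} = 0 := by
    rintro s ⟨hs0, hs⟩
    rcases hs0.eq_or_lt with rfl | hpos
    · exact hν0
    have hlim := (runSup_mono hv).tendsto_leftLim s
    have hll : leftLim (runSup v) s = runSup v s := by
      refine le_antisymm ((runSup_mono hv).leftLim_le le_rfl) ?_
      by_contra hcon
      push Not at hcon
      have h0' : 0 ≤ leftLim (runSup v) s :=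
        (runSup_nonneg v 0).trans ((runSup_mono hv).le_leftLim hpos)
      have : runSup v s ≤ max (leftLim (runSup v) s) (-(v s)) := by
        refine runSup_le (h0'.trans (le_max_left _ _)) ?_
        intro x hx0 hx
        rcases hx.eq_or_lt with rfl | hx
        · exact le_max_right _ _
        · exact ((le_runSup hv hx0 le_rfl).trans
            ((runSup_mono hv).le_leftLim hx)).trans (le_max_left _ _)
      rcases le_max_iff.1 this with h | h <;> linarith
    rw [hll] at hlim
    have h1 : Tendsto (fun r => ENNReal.ofReal (-runSup v r - -runSup v s)) (𝓝[<] s) (𝓝 0) := by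
      have := ENNReal.tendsto_ofReal (hlim.neg.sub_const (-runSup v s))
      simpa using this
    refine le_antisymm (ge_of_tendsto h1 ?_) zero_le
    filter_upwards [Ioo_mem_nhdsLT hpos] with r hr
    rw [← hν r s hr.1.le hr.2.le]
    exact measure_mono (by rintro _ rfl; exact ⟨hr.2, le_rfl⟩)
  -- right null neighbourhoods
  have hright : ∀ s ∈ A, ∃ r, s < r ∧ ν (Ioo s r) = 0 := by
    rintro s ⟨hs0, hs⟩
    have h1 : ∀ᶠ x in 𝓝[≥] s, -runSup v s < v x :=
      (hv.1 s hs0).tendsto.eventually (lt_mem_nhds hs)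
    obtain ⟨r, hr, hr2⟩ := mem_nhdsGE_iff_exists_Ico_subset.1 h1
    have hr : s < r := hr
    refine ⟨(s + r) / 2, by linarith, ?_⟩
    have h2 : runSup v ((s + r) / 2) ≤ runSup v s := by
      refine runSup_le (runSup_nonneg _ _) fun x hx0 hx => ?_
      rcases le_total x s with h | h
      · exact le_runSup hv hx0 h
      · have : -runSup v s < v x := hr2 (⟨h, by linarith⟩ : x ∈ Ico s r)
        linarith
    refine measure_mono_null Ioo_subset_Ioc_self ?_
    rw [hν _ _ hs0 (by linarith), ENNReal.ofReal_eq_zero]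
    linarith
  choose! y hy hyν using hright
  set U : Set ℝ := ⋃ s ∈ A, Ioo s (y s) with hU
  have hUnull : ν U = 0 := by
    refine measure_null_of_locally_null _ fun x hx => ?_
    obtain ⟨s, hs, hxs⟩ := mem_iUnion₂.1 hx
    exact ⟨Ioo s (y s), mem_nhdsWithin_of_mem_nhds (Ioo_mem_nhds hxs.1 hxs.2), hyν s hs⟩
  have hcount : (A \ U).Countable := by
    refine Set.PairwiseDisjoint.countable_of_Ioo (y := y) ?_ fun x hx => hy x hx.1
    have key : ∀ a ∈ A \ U, ∀ b ∈ A \ U, a < b → Disjoint (Ioo a (y a)) (Ioo b (y b)) := by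
      intro a ha b hb hab
      have : y a ≤ b := by
        by_contra hc
        push Not at hc
        exact hb.2 (mem_iUnion₂.2 ⟨a, ha.1, hab, hc⟩)
      rw [Set.disjoint_left]
      intro z hz hz'
      exact absurd (hz.2.trans_le this) (not_lt.2 hz'.1.le)
    intro a ha b hb hab
    rcases lt_or_gt_of_ne hab with h | h
    · exact key a ha b hb h
    · exact (key b hb a ha h).symm
  have hnull2 : ν (A \ U) = 0 := by
    rw [← biUnion_of_singleton (A \ U), measure_biUnion_null_iff hcount]
    exact fun s hs => hsing s hs.1
  refine measure_mono_null (t := U ∪ (A \ U)) ?_ (measure_union_null hUnull hnull2)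
  intro x hx
  by_cases h : x ∈ U
  · exact Or.inl h
  · exact Or.inr ⟨hx, h⟩

lemma det_unique {v k F : ℝ → ℝ} (hv : CadlagOn v) (hk : CadlagOn k) (hF : CadlagOn F)
    (hk0 : k 0 = 0) (hanti : AntitoneOn k (Set.Ici 0)) (hkv : ∀ t, 0 ≤ t → k t ≤ v t)
    (hFnn : ∀ t, 0 ≤ t → 0 ≤ F t) (hFpos : ∀ t, 0 ≤ t → k t < v t → 0 < F t)
    (hmin : ∀ ν : Measure ℝ,
      (∀ a b : ℝ, 0 ≤ a → a ≤ b → ν (Set.Ioc a b) = ENNReal.ofReal (k a - k b)) →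
      ν {0} = 0 →
      ∀ t : ℝ, 0 ≤ t → (∫ s in Set.Icc 0 t, F s ∂ν) = 0) :
    ∀ t, 0 ≤ t → k t = -runSup v t := by
  intro t ht
  have hkle : runSup v t ≤ -k t := by
    have hkt : k t ≤ 0 := hk0 ▸ hanti (by simp) ht ht
    refine runSup_le (by linarith) fun s hs0 hs => ?_
    have h1 := hanti (mem_Ici.2 hs0) (mem_Ici.2 ht) hs
    have h2 := hkv s hs0
    linarith
  by_contra hne
  have hlt : k t < -runSup v t := lt_of_le_of_ne (by linarith) hne
  set m := -runSup v t with hm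
  have hm0 : m ≤ 0 := by have := runSup_nonneg v t; linarith
  -- the Stieltjes measure
  let f : StieltjesFunction ℝ :=
    { toFun := fun x => -k (max x 0)
      mono' := by
        intro a b hab
        exact neg_le_neg (hanti (mem_Ici.2 (le_max_right _ _)) (mem_Ici.2 (le_max_right _ _))
          (max_le_max_right 0 hab))
      right_continuous' := fun x => (hk.right' x).neg }
  have hf : ∀ x, 0 ≤ x → f x = -k x := by
    intro x hx
    change -k (max x 0) = -k x
    rw [max_eq_left hx]
  have hIoc : ∀ a b : ℝ, 0 ≤ a → a ≤ b → f.measure (Set.Ioc a b) = ENNReal.ofReal (k a - k b) := by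
    intro a b ha hab
    rw [f.measure_Ioc, hf a ha, hf b (ha.trans hab)]
    congr 1; ring
  have hf0 : leftLim f 0 = 0 := by
    apply leftLim_eq_of_tendsto
    refine tendsto_const_nhds.congr' ?_
    filter_upwards [self_mem_nhdsWithin] with x hx
    change 0 = -k (max x 0)
    rw [max_eq_right (le_of_lt hx), hk0, neg_zero]
  have hsing : f.measure {0} = 0 := by
    rw [f.measure_singleton, hf0, hf 0 le_rfl, hk0]; simp
  have hint := hmin f.measure hIoc hsing t ht
  have hfin : IsFiniteMeasure (f.measure.restrict (Icc 0 t)) :=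
    ⟨by rw [Measure.restrict_apply_univ, f.measure_Icc]; exact ENNReal.ofReal_lt_top⟩
  have hae : ∀ᵐ s ∂(f.measure.restrict (Icc 0 t)), s ∈ Icc 0 t := ae_restrict_mem measurableSet_Icc
  have hFint : Integrable F (f.measure.restrict (Icc 0 t)) := by
    obtain ⟨C, hC⟩ := hF.bdd t
    refine Integrable.of_bound (C := C) ?_ ?_
    · refine hF.measurable'.aestronglyMeasurable.congr ?_
      filter_upwards [hae] with s hs
      rw [max_eq_left hs.1]
    · filter_upwards [hae] with s hs
      exact hC s hs
  have hz : F =ᵐ[f.measure.restrict (Icc 0 t)] 0 := by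
    refine (integral_eq_zero_iff_of_nonneg_ae ?_ hFint).1 hint
    filter_upwards [hae] with s hs
    exact hFnn s hs.1
  have hnull : f.measure {s | s ∈ Icc 0 t ∧ k s < m} = 0 := by
    have h1 : f.measure.restrict (Icc 0 t) {s | ¬ F s = 0} = 0 := hz
    rw [Measure.restrict_apply' measurableSet_Icc] at h1
    refine measure_mono_null ?_ h1
    rintro s ⟨hs, hsm⟩
    refine ⟨(hFpos s hs.1 ?_).ne', hs⟩
    have := le_runSup hv hs.1 hs.2
    linarith
  set S : Set ℝ := {s | s ∈ Icc 0 t ∧ k s < m} with hS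
  have htS : t ∈ S := ⟨⟨ht, le_rfl⟩, hlt⟩
  have hSb : BddBelow S := ⟨0, fun s hs => hs.1.1⟩
  set τ := sInf S with hτ
  have hτ0 : 0 ≤ τ := le_csInf ⟨t, htS⟩ fun s hs => hs.1.1
  have hτt : τ ≤ t := csInf_le hSb htS
  have hup : ∀ s, τ < s → s ≤ t → s ∈ S := by
    intro s hs hst
    obtain ⟨r, hr, hrs⟩ := exists_lt_of_csInf_lt ⟨t, htS⟩ hs
    have h0r := hr.1.1
    exact ⟨⟨h0r.trans hrs.le, hst⟩, (hanti h0r (h0r.trans hrs.le) hrs.le).trans_lt hr.2⟩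
  by_cases hτS : τ ∈ S
  · have hτpos : 0 < τ := by
      rcases hτ0.eq_or_lt with h | h
      · exfalso
        have := hτS.2
        rw [← h, hk0] at this
        linarith
      · exact h
    have hll : leftLim f τ ≤ -m := by
      refine le_of_tendsto (f.mono.tendsto_leftLim τ) ?_
      filter_upwards [Ioo_mem_nhdsLT hτpos] with s hs
      rw [hf s hs.1.le]
      have : ¬ k s < m := fun h => notMem_of_lt_csInf hs.2 hSb ⟨⟨hs.1.le, hs.2.le.trans hτt⟩, h⟩
      linarith
    have h1 : f.measure (Icc τ t) = 0 := by
      refine measure_mono_null ?_ hnull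
      intro s hs
      rcases hs.1.eq_or_lt with h | h
      · rw [← h]; exact hτS
      · exact hup s h hs.2
    rw [f.measure_Icc, ENNReal.ofReal_eq_zero, hf t ht] at h1
    linarith
  · have h1 : f.measure (Ioc τ t) = 0 := by
      refine measure_mono_null ?_ hnull
      intro s hs
      exact hup s hs.1 hs.2
    rw [hIoc τ t hτ0 hτt, ENNReal.ofReal_eq_zero] at h1
    exact hτS ⟨⟨hτ0, hτt⟩, by linarith⟩

/-- `D` is a modulus with càdlàg-type behaviour. -/
def CMod (D : ℝ → ℝ → ℝ) : Prop :=
  (∀ t : ℝ, 0 ≤ t → Tendsto (fun r => D r t) (𝓝[≥] t) (𝓝 0)) ∧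
  ∀ t : ℝ, 0 < t → Tendsto (fun p : ℝ × ℝ => D p.1 p.2) (𝓝[<] t ×ˢ 𝓝[<] t) (𝓝 0)

lemma CMod.add {D E : ℝ → ℝ → ℝ} (hD : CMod D) (hE : CMod E) :
    CMod (fun r s => D r s + E r s) :=
  ⟨fun t ht => by simpa using (hD.1 t ht).add (hE.1 t ht),
    fun t ht => by simpa using (hD.2 t ht).add (hE.2 t ht)⟩

lemma CMod.const_mul {D : ℝ → ℝ → ℝ} (hD : CMod D) (c : ℝ) :
    CMod (fun r s => c * D r s) :=
  ⟨fun t ht => by simpa using (hD.1 t ht).const_mul c,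
    fun t ht => by simpa using (hD.2 t ht).const_mul c⟩

lemma CadlagOn.cmod {f : ℝ → ℝ} (hf : CadlagOn f) : CMod (fun r s => |f r - f s|) := by
  constructor
  · intro t ht
    simpa using ((hf.1 t ht).tendsto.sub_const (f t)).abs
  · intro t ht
    obtain ⟨L, hL⟩ := hf.2 t ht
    have h1 : Tendsto (fun p : ℝ × ℝ => f p.1) (𝓝[<] t ×ˢ 𝓝[<] t) (𝓝 L) := hL.comp tendsto_fst
    have h2 : Tendsto (fun p : ℝ × ℝ => f p.2) (𝓝[<] t ×ˢ 𝓝[<] t) (𝓝 L) := hL.comp tendsto_snd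
    simpa using (h1.sub h2).abs

lemma cadlagOn_id : CadlagOn (fun t : ℝ => t) :=
  ⟨fun _ _ => continuous_id.continuousWithinAt,
    fun t _ => ⟨t, tendsto_id.mono_left nhdsWithin_le_nhds⟩⟩

lemma CMod.cadlag {D : ℝ → ℝ → ℝ} (hD : CMod D) {a : ℝ → ℝ}
    (ha : ∀ r s, 0 ≤ r → 0 ≤ s → |a r - a s| ≤ D r s) : CadlagOn a := by
  constructor
  · intro t ht
    change Tendsto a (𝓝[≥] t) (𝓝 (a t))
    rw [tendsto_iff_dist_tendsto_zero]
    refine squeeze_zero' (Eventually.of_forall fun _ => dist_nonneg) ?_ (hD.1 t ht)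
    filter_upwards [self_mem_nhdsWithin] with r hr
    exact ha r t (ht.trans hr) ht
  · intro t ht
    have hpos : ∀ᶠ r in 𝓝[<] t, 0 ≤ r := by
      filter_upwards [Ioo_mem_nhdsLT ht] with r hr using hr.1.le
    have : Cauchy (map a (𝓝[<] t)) := by
      rw [Metric.cauchy_iff]
      refine ⟨inferInstance, fun ε hε => ?_⟩
      have h1 := (hD.2 t ht).eventually (gt_mem_nhds hε)
      obtain ⟨pa, hpa, hh⟩ := (eventually_prod_self_iff (r := fun x y => D x y < ε)).1 h1
      refine ⟨a '' (pa ∩ {r | 0 ≤ r}), image_mem_map (inter_mem hpa hpos), ?_⟩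
      rintro _ ⟨r, hr, rfl⟩ _ ⟨s, hs, rfl⟩
      exact (ha r s hr.2 hs.2).trans_lt (hh r hr.1 s hs.1)
    exact cauchy_map_iff_exists_tendsto.1 this

section prob

variable {Ω : Type*} [MeasurableSpace Ω] {μ : Measure Ω} [IsProbabilityMeasure μ]
  {Y : ℝ → Ω → ℝ}

lemma L1_seq (hY : NiceProcess μ Y) {q : ℝ} (hq : 0 ≤ q) (x : ℕ → Set.Icc (0:ℝ) q)
    (Z : Ω → ℝ) (hZ : ∀ ω, Tendsto (fun n => Y (x n) ω) atTop (𝓝 (Z ω))) :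
    Integrable Z μ ∧ Tendsto (fun n => ∫ ω, |Y (x n) ω - Z ω| ∂μ) atTop (𝓝 0) := by
  have hUI := hY.unifInt q hq
  have hUI2 : UniformIntegrable (fun n => Y (x n)) 1 μ := by
    refine ⟨fun n => hUI.1 (x n), ?_, ?_⟩
    · intro ε hε
      obtain ⟨δ, hδ, h⟩ := hUI.2.1 hε
      exact ⟨δ, hδ, fun n => h (x n)⟩
    · obtain ⟨C, hC⟩ := hUI.2.2
      exact ⟨C, fun n => hC (x n)⟩
  have hZm : MemLp Z 1 μ := hUI2.memLp_of_ae_tendsto (u := atTop) (Eventually.of_forall hZ)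
  have hlim := tendsto_Lp_finite_of_tendsto_ae le_rfl (by simp) hUI2.1 hZm hUI2.2.1
    (Eventually.of_forall hZ)
  refine ⟨memLp_one_iff_integrable.1 hZm, ?_⟩
  have := (ENNReal.tendsto_toReal (by simp)).comp hlim
  simp only [ENNReal.toReal_zero] at this
  refine this.congr fun n => ?_
  have hm : AEStronglyMeasurable (Y (x n) - Z) μ := (hUI2.1 n).sub hZm.1
  simp only [Function.comp]
  rw [eLpNorm_one_eq_lintegral_enorm, ← integral_norm_eq_lintegral_enorm hm]
  rfl

lemma L1_filter (hY : NiceProcess μ Y) {q : ℝ} (hq : 0 ≤ q) (l : Filter ℝ)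
    [l.IsCountablyGenerated] [l.NeBot] (hl : ∀ᶠ s in l, s ∈ Set.Icc 0 q)
    (Z : Ω → ℝ) (hZ : ∀ ω, Tendsto (fun s => Y s ω) l (𝓝 (Z ω))) :
    Integrable Z μ ∧ Tendsto (fun s => ∫ ω, |Y s ω - Z ω| ∂μ) l (𝓝 0) := by
  have key : ∀ x : ℕ → ℝ, Tendsto x atTop l →
      Integrable Z μ ∧ Tendsto (fun n => ∫ ω, |Y (x n) ω - Z ω| ∂μ) atTop (𝓝 0) := by
    intro x hx
    have hev : ∀ᶠ n in atTop, ((projIcc 0 q hq (x n) : Set.Icc (0:ℝ) q) : ℝ) = x n := by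
      filter_upwards [hx.eventually hl] with n hn
      rw [projIcc_of_mem hq hn]
    have := L1_seq hY hq (fun n => projIcc 0 q hq (x n)) Z (fun ω => by
      refine ((hZ ω).comp hx).congr' ?_
      filter_upwards [hev] with n hn
      simp [hn])
    refine ⟨this.1, this.2.congr' ?_⟩
    filter_upwards [hev] with n hn
    rw [hn]
  obtain ⟨x, hx⟩ := exists_seq_tendsto l
  exact ⟨(key x hx).1, tendsto_of_seq_tendsto fun x hx => (key x hx).2⟩

lemma Y_cmod (hY : NiceProcess μ Y) : CMod (fun r s => ∫ ω, |Y r ω - Y s ω| ∂μ) := by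
  constructor
  · intro t ht
    refine (L1_filter hY (q := t + 1) (by linarith) (𝓝[≥] t) ?_ (Y t) ?_).2
    · filter_upwards [Icc_mem_nhdsGE (lt_add_one t)] with s hs
      exact ⟨ht.trans hs.1, hs.2⟩
    · intro ω
      exact ((hY.cadlag ω).1 t ht).tendsto
  · intro t ht
    choose Z hZ using fun ω => (hY.cadlag ω).2 t ht
    have hmem : ∀ᶠ s in 𝓝[<] t, s ∈ Set.Icc 0 t := by
      filter_upwards [Ioo_mem_nhdsLT ht] with s hs
      exact ⟨hs.1.le, hs.2.le⟩
    obtain ⟨hZi, hlim⟩ := L1_filter hY ht.le (𝓝[<] t) hmem Z hZ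
    have h1 : Tendsto (fun p : ℝ × ℝ => ∫ ω, |Y p.1 ω - Z ω| ∂μ) (𝓝[<] t ×ˢ 𝓝[<] t) (𝓝 0) :=
      hlim.comp tendsto_fst
    have h2 : Tendsto (fun p : ℝ × ℝ => ∫ ω, |Y p.2 ω - Z ω| ∂μ) (𝓝[<] t ×ˢ 𝓝[<] t) (𝓝 0) :=
      hlim.comp tendsto_snd
    have h3 := h1.add h2
    rw [add_zero] at h3
    refine squeeze_zero' (Eventually.of_forall fun p => integral_nonneg fun ω => abs_nonneg _) ?_ h3
    filter_upwards [hmem.prod_mk hmem] with p hp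
    have i1 := hY.integrable _ hp.1.1
    have i2 := hY.integrable _ hp.2.1
    have j1 : Integrable (fun ω => |Y p.1 ω - Z ω|) μ := (i1.sub hZi).abs
    have j2 : Integrable (fun ω => |Y p.2 ω - Z ω|) μ := (i2.sub hZi).abs
    rw [← integral_add j1 j2]
    refine integral_mono (i1.sub i2).abs (j1.add j2) fun ω => ?_
    have := abs_sub_le (Y p.1 ω) (Z ω) (Y p.2 ω)
    rw [abs_sub_comm (Z ω)] at this
    exact this

variable {h : ℝ → ℝ → ℝ} {Mh Lh ch Ch : ℝ}

lemma h_int (hH : CondH h Mh Lh ch Ch) (hY : NiceProcess μ Y) {t : ℝ} (ht : 0 ≤ t) (z : ℝ) :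
    Integrable (fun ω => h t (Y t ω + z)) μ := by
  have hi : Integrable (fun ω => Y t ω + z) μ := (hY.integrable t ht).add (integrable_const z)
  have hm : Measurable (h t) := hH.meas.comp measurable_prodMk_left
  refine Integrable.mono' (g := fun ω => Mh * (1 + |Y t ω + z|)) ?_ ?_ ?_
  · exact ((integrable_const 1).add hi.abs).const_mul Mh
  · exact (hm.comp_aemeasurable hi.1.aemeasurable).aestronglyMeasurable
  · exact Eventually.of_forall fun ω => hH.growth t _ ht

/-- mean function -/
def HH (μ : Measure Ω) (h : ℝ → ℝ → ℝ) (Y : ℝ → Ω → ℝ) (t z : ℝ) : ℝ := ∫ ω, h t (Y t ω + z) ∂μ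

lemma HH_lower (hH : CondH h Mh Lh ch Ch) (hY : NiceProcess μ Y) {t : ℝ} (ht : 0 ≤ t)
    {y z : ℝ} (hyz : y ≤ z) : ch * (z - y) ≤ HH μ h Y t z - HH μ h Y t y := by
  unfold HH
  rw [← integral_sub (h_int hH hY ht z) (h_int hH hY ht y)]
  have : ch * (z - y) = ∫ _ω, ch * (z - y) ∂μ := by simp
  rw [this]
  refine integral_mono (integrable_const _) ((h_int hH hY ht z).sub (h_int hH hY ht y)) fun ω => ?_
  have h1 := hH.lip_lower t (Y t ω + z) (Y t ω + y) ht
  have h2 : h t (Y t ω + y) ≤ h t (Y t ω + z) :=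
    (hH.strict_mono t ht).monotone (by linarith)
  rw [abs_of_nonneg (by linarith), abs_of_nonneg (by linarith)] at h1
  calc ch * (z - y) = ch * (Y t ω + z - (Y t ω + y)) := by ring
    _ ≤ _ := h1

lemma HH_lower_abs (hH : CondH h Mh Lh ch Ch) (hY : NiceProcess μ Y) {t : ℝ} (ht : 0 ≤ t)
    (y z : ℝ) : ch * |z - y| ≤ |HH μ h Y t z - HH μ h Y t y| := by
  rcases le_total y z with hyz | hyz
  · rw [abs_of_nonneg (sub_nonneg.2 hyz)]
    exact (HH_lower hH hY ht hyz).trans (le_abs_self _)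
  · rw [abs_sub_comm, abs_of_nonneg (sub_nonneg.2 hyz), abs_sub_comm]
    exact (HH_lower hH hY ht hyz).trans (le_abs_self _)

lemma HH_upper (hH : CondH h Mh Lh ch Ch) (hY : NiceProcess μ Y) {s t : ℝ} (hs : 0 ≤ s)
    (ht : 0 ≤ t) (y z : ℝ) : |HH μ h Y t z - HH μ h Y s y| ≤
      Lh * |t - s| + Ch * (∫ ω, |Y t ω - Y s ω| ∂μ) + Ch * |z - y| := by
  unfold HH
  rw [← integral_sub (h_int hH hY ht z) (h_int hH hY hs y)]
  refine (abs_integral_le_integral_abs).trans ?_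
  have hYi : Integrable (fun ω => |Y t ω - Y s ω|) μ :=
    ((hY.integrable t ht).sub (hY.integrable s hs)).abs
  have : Lh * |t - s| + Ch * (∫ ω, |Y t ω - Y s ω| ∂μ) + Ch * |z - y|
      = ∫ ω, (Lh * |t - s| + Ch * |Y t ω - Y s ω| + Ch * |z - y|) ∂μ := by
    have j1 : Integrable (fun ω => Lh * |t - s| + Ch * |Y t ω - Y s ω|) μ :=
      (integrable_const _).add (hYi.const_mul _)
    rw [integral_add j1 (integrable_const _),
      integral_add (integrable_const _) (hYi.const_mul _), integral_const_mul Ch (fun ω => |Y t ω - Y s ω|)]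
    simp
  rw [this]
  refine integral_mono ((h_int hH hY ht z).sub (h_int hH hY hs y)).abs
    (((integrable_const _).add (hYi.const_mul _)).add (integrable_const _)) fun ω => ?_
  have h1 := hH.lip_time s t (Y t ω + z) hs ht
  have h2 := hH.lip_upper s (Y t ω + z) (Y s ω + y) hs
  have h3 : |Y t ω + z - (Y s ω + y)| ≤ |Y t ω - Y s ω| + |z - y| := by
    rw [show Y t ω + z - (Y s ω + y) = (Y t ω - Y s ω) + (z - y) by ring]
    exact abs_add_le _ _
  have h4 := mul_le_mul_of_nonneg_left h3 hH.Ch_pos.le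
  have h5 := abs_sub_le (h t (Y t ω + z)) (h s (Y t ω + z)) (h s (Y s ω + y))
  linarith

lemma HH_cadlag (hH : CondH h Mh Lh ch Ch) (hY : NiceProcess μ Y) {a : ℝ → ℝ}
    (ha : CadlagOn a) : CadlagOn (fun t => HH μ h Y t (a t)) :=
  (((cadlagOn_id.cmod.const_mul Lh).add ((Y_cmod hY).const_mul Ch)).add
    (ha.cmod.const_mul Ch)).cadlag fun _ _ hr hs => HH_upper hH hY hs hr _ _

lemma v_cadlag (hH : CondH h Mh Lh ch Ch) (hY : NiceProcess μ Y) {u v : ℝ → ℝ}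
    (hu : CadlagOn u) (hv : ∀ t, 0 ≤ t → HH μ h Y t (v t) = u t) : CadlagOn v := by
  refine ((((cadlagOn_id.cmod.const_mul Lh).add ((Y_cmod hY).const_mul Ch)).add
    hu.cmod).const_mul ch⁻¹).cadlag fun r s hr hs => ?_
  rw [inv_mul_eq_div, le_div_iff₀' hH.ch_pos]
  have h1 := HH_lower_abs hH hY hr (v s) (v r)
  have h2 := HH_upper hH hY hs hr (v s) (v s)
  have h3 := abs_sub_le (HH μ h Y r (v r)) (HH μ h Y s (v s)) (HH μ h Y r (v s))
  rw [abs_sub_comm (HH μ h Y s (v s)), hv r hr, hv s hs] at h3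
  rw [hv s hs] at h2
  rw [hv r hr] at h1
  simp only [sub_self, abs_zero, mul_zero, add_zero] at h2
  linarith

lemma HH_le_iff (hH : CondH h Mh Lh ch Ch) (hY : NiceProcess μ Y) {t : ℝ} (ht : 0 ≤ t)
    {y z : ℝ} : HH μ h Y t y ≤ HH μ h Y t z ↔ y ≤ z := by
  have : StrictMono (HH μ h Y t) := by
    intro y z hyz
    have h1 := HH_lower hH hY ht hyz.le
    have h2 := mul_pos hH.ch_pos (sub_pos.2 hyz)
    linarith
  exact this.le_iff_le

end prob

/-- existence, uniqueness and explicit formula for the Skorokhod problem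
with mean minimality condition and a single upper barrier. -/
theorem stmt_13 {Ω : Type*} [MeasurableSpace Ω] (μ : Measure Ω) [IsProbabilityMeasure μ]
    (h : ℝ → ℝ → ℝ) (Mh Lh ch Ch : ℝ) (hH : CondH h Mh Lh ch Ch)
    (Y : ℝ → Ω → ℝ) (hY : NiceProcess μ Y)
    (u : ℝ → ℝ) (hu : CadlagOn u) (h0 : (∫ ω, h 0 (Y 0 ω) ∂μ) ≤ u 0)
    (ubar : ℝ → ℝ)
    (hubar : ∀ s : ℝ, 0 ≤ s → (∫ ω, h s (Y s ω - (∫ ω', Y s ω' ∂μ) + ubar s) ∂μ) = u s) :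
    (∃ (X : ℝ → Ω → ℝ) (k : ℝ → ℝ), MeanSPUpper μ h Y u X k) ∧
    (∀ (X X' : ℝ → Ω → ℝ) (k k' : ℝ → ℝ),
      MeanSPUpper μ h Y u X k → MeanSPUpper μ h Y u X' k' →
      ∀ t : ℝ, 0 ≤ t → k t = k' t ∧ ∀ ω, X t ω = X' t ω) ∧
    (∀ (X : ℝ → Ω → ℝ) (k : ℝ → ℝ), MeanSPUpper μ h Y u X k →
      ∀ t : ℝ, 0 ≤ t →
        k t = -sSup ((fun s => max (-(ubar s - ∫ ω, Y s ω ∂μ)) 0) '' Set.Icc 0 t)) := by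
  set v : ℝ → ℝ := fun s => ubar s - ∫ ω, Y s ω ∂μ with hvdef
  have hvu : ∀ t, 0 ≤ t → HH μ h Y t (v t) = u t := by
    intro t ht
    rw [← hubar t ht]
    unfold HH
    congr 1
    ext ω
    congr 1
    simp only [hvdef]
    ring
  have hv : CadlagOn v := v_cadlag hH hY hu hvu
  have hv0 : 0 ≤ v 0 := by
    rw [← HH_le_iff hH hY le_rfl, hvu 0 le_rfl]
    simpa [HH] using h0
  have formula : ∀ (X : ℝ → Ω → ℝ) (k : ℝ → ℝ), MeanSPUpper μ h Y u X k →
      ∀ t : ℝ, 0 ≤ t → k t = -runSup v t := by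
    rintro X k ⟨-, hk, hk0, hX, hle, hanti, hmin⟩
    have hEX : ∀ t, 0 ≤ t → (∫ ω, h t (X t ω) ∂μ) = HH μ h Y t (k t) := by
      intro t ht
      unfold HH
      congr 1
      ext ω
      rw [hX t ht ω]
    have hkv : ∀ t, 0 ≤ t → k t ≤ v t := by
      intro t ht
      rw [← HH_le_iff hH hY ht, hvu t ht, ← hEX t ht]
      exact hle t ht
    have hF : CadlagOn (fun t => u t - HH μ h Y t (k t)) := by
      have h1 := hu.cmod.add (HH_cadlag hH hY hk).cmod
      refine h1.cadlag fun r s _ _ => ?_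
      have := abs_sub (u r - u s) (HH μ h Y r (k r) - HH μ h Y s (k s))
      rw [show u r - HH μ h Y r (k r) - (u s - HH μ h Y s (k s))
        = u r - u s - (HH μ h Y r (k r) - HH μ h Y s (k s)) by ring]
      exact this
    refine det_unique hv hk hF hk0 hanti hkv ?_ ?_ ?_
    · intro t ht
      rw [sub_nonneg, ← hvu t ht, HH_le_iff hH hY ht]
      exact hkv t ht
    · intro t ht hlt
      rw [sub_pos, ← hvu t ht, ← not_le, HH_le_iff hH hY ht, not_le]
      exact hlt
    · intro ν h1 h2 t ht
      refine Eq.trans ?_ (hmin ν h1 h2 t ht)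
      refine setIntegral_congr_fun (measurableSet_Icc (a := (0:ℝ)) (b := t)) fun s hs => ?_
      simp only [hEX s hs.1]
  refine ⟨⟨fun t ω => Y t ω + -runSup v t, fun t => -runSup v t, ?_⟩, ?_, formula⟩
  · have hk := runSup_cadlag hv
    have hkv : ∀ t, 0 ≤ t → -runSup v t ≤ v t := by
      intro t ht
      have := le_runSup hv ht le_rfl
      linarith
    refine ⟨?_, hk, by simp [runSup_zero hv0], fun _ _ _ => rfl, ?_, ?_, ?_⟩
    · intro ω
      refine ⟨fun t ht => ((hY.cadlag ω).1 t ht).add (hk.1 t ht), fun t ht => ?_⟩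
      obtain ⟨L, hL⟩ := (hY.cadlag ω).2 t ht
      obtain ⟨L', hL'⟩ := hk.2 t ht
      exact ⟨L + L', hL.add hL'⟩
    · intro t ht
      rw [← hvu t ht]
      exact (HH_le_iff hH hY ht).2 (hkv t ht)
    · intro a _ b _ hab
      exact neg_le_neg (runSup_mono hv hab)
    · intro ν h1 h2 t ht
      have hnull := det_exist hv ν h1 h2
      refine integral_eq_zero_of_ae ?_
      have hnull' : ∀ᵐ s ∂ν, ¬ (0 ≤ s ∧ -runSup v s < v s) := by
        rw [ae_iff]; simpa using hnull
      filter_upwards [ae_restrict_of_ae hnull', ae_restrict_mem (measurableSet_Icc (a := (0:ℝ)) (b := t))]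
        with s hs hs'
      have heq : -runSup v s = v s := by
        refine le_antisymm (hkv s hs'.1) ?_
        by_contra hc
        exact hs ⟨hs'.1, not_le.1 hc⟩
      have := hvu s hs'.1
      rw [← heq] at this
      unfold HH at this
      simp only [this, sub_self, Pi.zero_apply]
  · intro X X' k k' hk hk' t ht
    have : k t = k' t := (formula X k hk t ht).trans (formula X' k' hk' t ht).symm
    refine ⟨this, fun ω => ?_⟩
    rw [hk.2.2.2.1 t ht ω, hk'.2.2.2.1 t ht ω, this]
end
end

section
/- Let (Ω, F, P) be a probability space, Z an integrable real random variable, s ≥ 0 and w ∈ ℝ, and let z̄ ∈ ℝ be the unique real number with E[h(s, Z − E[Z] + z̄)] = w. Then (z̄ − E[Z])⁺ = inf{ x ≥ 0 : E[h(s, Z + x)] ≥ w }, where a⁺ = max(a, 0). -/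
open MeasureTheory Filter Set Function Topology

noncomputable section

/-- `(z̄ - E Z)⁺ = inf{ x ≥ 0 : E[h(s, Z + x)] ≥ w }`. -/
theorem stmt_14 {Ω : Type*} [MeasurableSpace Ω] (μ : Measure Ω) [IsProbabilityMeasure μ]
    (h : ℝ → ℝ → ℝ) (Mh Lh ch Ch : ℝ) (hH : CondH h Mh Lh ch Ch)
    (Z : Ω → ℝ) (hZ : Integrable Z μ) (s : ℝ) (hs : 0 ≤ s) (w : ℝ) (zbar : ℝ)
    (hzbar : (∫ ω, h s (Z ω - (∫ ω', Z ω' ∂μ) + zbar) ∂μ) = w) :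
    max (zbar - ∫ ω, Z ω ∂μ) 0 =
      sInf {x : ℝ | 0 ≤ x ∧ w ≤ ∫ ω, h s (Z ω + x) ∂μ} := by
  have hint : ∀ x : ℝ, Integrable (fun ω => h s (Z ω + x)) μ := by
    intro x
    have hm : Measurable (h s) := hH.meas.comp measurable_prodMk_left
    have hg : Integrable (fun ω => Mh * (1 + |Z ω + x|)) μ :=
      ((integrable_const (1 : ℝ)).add (hZ.add (integrable_const x)).abs).const_mul Mh
    refine hg.mono' ?_ (Eventually.of_forall fun ω => ?_)
    · exact (hm.comp_aemeasurable (hZ.aemeasurable.add_const x)).aestronglyMeasurable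
    · simpa [Real.norm_eq_abs] using hH.growth s (Z ω + x) hs
  have hF : StrictMono (fun x : ℝ => ∫ ω, h s (Z ω + x) ∂μ) := by
    intro x y hxy
    have h1 : ∫ ω, (h s (Z ω + x) + ch * (y - x)) ∂μ ≤ ∫ ω, h s (Z ω + y) ∂μ := by
      refine integral_mono ((hint x).add (integrable_const _)) (hint y) fun ω => ?_
      have h2 := hH.lip_lower s (Z ω + y) (Z ω + x) hs
      have h3 : h s (Z ω + x) < h s (Z ω + y) := hH.strict_mono s hs (by linarith)
      rw [abs_of_pos (sub_pos.2 h3), abs_of_pos (by linarith)] at h2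
      have h4 : Z ω + y - (Z ω + x) = y - x := by ring
      rw [h4] at h2
      show h s (Z ω + x) + ch * (y - x) ≤ h s (Z ω + y)
      linarith
    rw [integral_add (hint x) (integrable_const _)] at h1
    have h5 : 0 < ch * (y - x) := mul_pos hH.ch_pos (sub_pos.2 hxy)
    simp only [integral_const, probReal_univ, one_smul] at h1
    show ∫ ω, h s (Z ω + x) ∂μ < ∫ ω, h s (Z ω + y) ∂μ
    linarith
  have hw : w = ∫ ω, h s (Z ω + (zbar - ∫ ω', Z ω' ∂μ)) ∂μ := by
    rw [← hzbar]
    congr 1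
    funext ω
    congr 1
    ring
  have hset : {x : ℝ | 0 ≤ x ∧ w ≤ ∫ ω, h s (Z ω + x) ∂μ}
      = Set.Ici (max (zbar - ∫ ω, Z ω ∂μ) 0) := by
    ext x
    have h6 := hF.le_iff_le (a := zbar - ∫ ω, Z ω ∂μ) (b := x)
    simp only [← hw] at h6
    simp only [Set.mem_setOf_eq, Set.mem_Ici, max_le_iff]
    rw [h6, and_comm]
  rw [hset, csInf_Ici]
end
end

section
/- Let (Ω, F, P) be a probability space, Z an integrable real random variable, s ≥ 0 and w ∈ ℝ, and let z̄ ∈ ℝ be the unique real number with E[h(s, Z − E[Z] + z̄)] = w. Then (z̄ − E[Z])⁻ = inf{ x ≥ 0 : E[h(s, Z − x)] ≤ w }, where a⁻ = max(−a, 0). -/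
open MeasureTheory Filter Set Function Topology

noncomputable section

/-- `(z̄ - E Z)⁻ = inf{ x ≥ 0 : E[h(s, Z - x)] ≤ w }`. -/
theorem stmt_15 {Ω : Type*} [MeasurableSpace Ω] (μ : Measure Ω) [IsProbabilityMeasure μ]
    (h : ℝ → ℝ → ℝ) (Mh Lh ch Ch : ℝ) (hH : CondH h Mh Lh ch Ch)
    (Z : Ω → ℝ) (hZ : Integrable Z μ) (s : ℝ) (hs : 0 ≤ s) (w : ℝ) (zbar : ℝ)
    (hzbar : (∫ ω, h s (Z ω - (∫ ω', Z ω' ∂μ) + zbar) ∂μ) = w) :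
    max (-(zbar - ∫ ω, Z ω ∂μ)) 0 =
      sInf {x : ℝ | 0 ≤ x ∧ (∫ ω, h s (Z ω - x) ∂μ) ≤ w} := by
  have hmeas : Measurable (h s) := hH.meas.comp measurable_prodMk_left
  have hint : ∀ x : ℝ, Integrable (fun ω => h s (Z ω - x)) μ := by
    intro x
    have hZx : Integrable (fun ω => Z ω - x) μ := hZ.sub (integrable_const x)
    have hg : Integrable (fun ω => Mh * (1 + |Z ω - x|)) μ :=
      ((integrable_const (1 : ℝ)).add hZx.abs).const_mul Mh
    refine hg.mono' (hmeas.comp_aemeasurable hZx.aemeasurable).aestronglyMeasurable ?_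
    exact Filter.Eventually.of_forall fun ω => hH.growth s _ hs
  set a : ℝ := (∫ ω, Z ω ∂μ) - zbar with ha
  have hw : (∫ ω, h s (Z ω - a) ∂μ) = w := by
    rw [← hzbar]
    congr 1
    funext ω
    congr 1
    rw [ha]
    ring
  have hset : {x : ℝ | 0 ≤ x ∧ (∫ ω, h s (Z ω - x) ∂μ) ≤ w} = Set.Ici (max a 0) := by
    ext x
    simp only [Set.mem_ofPred_eq, Set.mem_Ici, max_le_iff]
    constructor
    · rintro ⟨hx, hle⟩
      refine ⟨?_, hx⟩
      by_contra hlt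
      have hlt : x < a := not_le.mp hlt
      have hpt : ∀ ω, h s (Z ω - a) + ch * (a - x) ≤ h s (Z ω - x) := by
        intro ω
        have h1 := hH.lip_lower s (Z ω - x) (Z ω - a) hs
        have h2 : h s (Z ω - a) < h s (Z ω - x) := hH.strict_mono s hs (by linarith)
        rw [abs_of_pos (sub_pos.mpr h2), abs_of_pos (by linarith)] at h1
        have h3 : Z ω - x - (Z ω - a) = a - x := by ring
        rw [h3] at h1
        linarith
      have hI := integral_mono ((hint a).add (integrable_const (ch * (a - x)))) (hint x) hpt
      have hE : (∫ ω, (h s (Z ω - a) + ch * (a - x)) ∂μ)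
          = w + ch * (a - x) := by
        rw [integral_add (hint a) (integrable_const _), hw]
        simp
      have hpos : 0 < ch * (a - x) := mul_pos hH.ch_pos (sub_pos.mpr hlt)
      have hI' := hE.symm.le.trans hI
      linarith
    · rintro ⟨hax, hx⟩
      refine ⟨hx, ?_⟩
      rw [← hw]
      exact integral_mono (hint x) (hint a) fun ω =>
        (hH.strict_mono s hs).monotone (by linarith)
  rw [hset, csInf_Ici, ha, neg_sub]
end
end
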